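/- (Theorem 1 of the paper: DGDS achieves a 1/16-approximation.) Let λ ∈ (0,1) and k ≥ 2. If a set A ⊆ S_1 ∪ … ∪ S_l with |A| = k satisfies F(A) ≥ (1/2)·F(opt(S_1 ∪ … ∪ S_l | k)) (the guarantee of the AltGreedy aggregation step of the DGDS algorithm), then F(A) ≥ (1/16)·F(O); i.e., the DGDS distributed algorithm returns a 1/16-approximation of the maximum of F over cardinality-k subsets of U. -/

import Mathlib

open Finset

def IsGreedySel {ι : Type*} (qf : ι → ℝ) (df : ι → ι → ℝ) (a b : ℝ)
    (T : Finset ι) (k : ℕ) (z : Fin k → ι) : Prop :=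
  Function.Injective z ∧ (∀ i, z i ∈ T) ∧
  (∀ hk : 0 < k, ∀ t ∈ T, qf t ≤ qf (z ⟨0, hk⟩)) ∧
  ∀ i : Fin k, ∀ t ∈ T, (∀ j : Fin k, j < i → t ≠ z j) →
    a * qf t + b * ∑ j ∈ Finset.filter (fun j => j < i) Finset.univ, df t (z j) ≤
      a * qf (z i) + b * ∑ j ∈ Finset.filter (fun j => j < i) Finset.univ, df (z i) (z j)

noncomputable def Qsum {M : Type*} (q : M → ℝ) (S : Finset M) : ℝ := ∑ u ∈ S, q u

noncomputable def Dsum {M : Type*} [MetricSpace M] [DecidableEq M] (S : Finset M) : ℝ :=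
  ∑ p ∈ S.offDiag, dist p.1 p.2

noncomputable def Fobj {M : Type*} [MetricSpace M] [DecidableEq M]
    (q : M → ℝ) (lam : ℝ) (S : Finset M) : ℝ :=
  lam * Qsum q S + (1 - lam) * Dsum S

def IsOptSubset {M : Type*} [MetricSpace M] [DecidableEq M] (q : M → ℝ) (lam : ℝ)
    (T : Finset M) (k : ℕ) (O : Finset M) : Prop :=
  O ⊆ T ∧ O.card = k ∧ ∀ B ⊆ T, B.card = k → Fobj q lam B ≤ Fobj q lam O


theorem aux_Dsum {M : Type*} [MetricSpace M] [DecidableEq M] (S : Finset M) :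
    Dsum S = ∑ u ∈ S, ∑ v ∈ S, dist u v := by
  unfold Dsum
  rw [← Finset.sum_product']
  apply Finset.sum_subset
  · intro p hp
    rw [Finset.mem_offDiag] at hp
    exact Finset.mem_product.2 ⟨hp.1, hp.2.1⟩
  · intro p hp hp'
    rw [Finset.mem_product] at hp
    rw [Finset.mem_offDiag] at hp'
    have : p.1 = p.2 := by
      by_contra h
      exact hp' ⟨hp.1, hp.2, h⟩
    rw [this, dist_self]

theorem aux_F_mono {M : Type*} [MetricSpace M] [DecidableEq M]
    (q : M → ℝ) (hq : ∀ u, 0 ≤ q u) (lam : ℝ) (h0 : 0 < lam) (h1 : lam < 1)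
    (S T : Finset M) (h : S ⊆ T) : Fobj q lam S ≤ Fobj q lam T := by
  unfold Fobj Qsum Dsum
  have e1 : ∑ u ∈ S, q u ≤ ∑ u ∈ T, q u :=
    Finset.sum_le_sum_of_subset_of_nonneg h (fun i _ _ => hq i)
  have e2 : ∑ p ∈ S.offDiag, dist p.1 p.2 ≤ ∑ p ∈ T.offDiag, dist p.1 p.2 :=
    Finset.sum_le_sum_of_subset_of_nonneg (Finset.offDiag_mono h) (fun i _ _ => dist_nonneg)
  have h2 : 0 ≤ 1 - lam := by linarith
  gcongr

theorem aux_greedy {M : Type*} [MetricSpace M] [DecidableEq M]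
    (q : M → ℝ) (lam : ℝ) (h1 : lam < 1)
    (k : ℕ) (T : Finset M) (z : Fin k → M)
    (hz : IsGreedySel q (fun u v => dist u v) lam (1 - lam) T k z)
    (t : M) (ht : t ∈ T) (htS : t ∉ Finset.univ.image z) :
    (k : ℝ) * (lam * q t) + ∑ m : Fin k, ((k : ℝ) - 1 - (m : ℕ)) * ((1 - lam) * dist t (z m)) ≤
      Fobj q lam (Finset.univ.image z) := by
  obtain ⟨hinj, hmem, -, hgr⟩ := hz
  have hne : ∀ j, t ≠ z j := by
    intro j h
    exact htS (Finset.mem_image.2 ⟨j, Finset.mem_univ _, h.symm⟩)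
  have key := Finset.sum_le_sum (s := (Finset.univ : Finset (Fin k)))
    (fun i _ => hgr i t ht (fun j _ => hne j))
  simp only [Finset.sum_add_distrib, ← Finset.mul_sum] at key
  rw [Finset.sum_const, Finset.card_univ, Fintype.card_fin, nsmul_eq_mul] at key
  have e1 : ∑ i : Fin k, ∑ j ∈ Finset.univ.filter (fun j => j < i), dist t (z j)
      = ∑ m : Fin k, ((k : ℝ) - 1 - (m : ℕ)) * dist t (z m) := by
    simp only [Finset.sum_filter]
    rw [Finset.sum_comm]
    apply Finset.sum_congr rfl
    intro m _
    rw [← Finset.sum_filter, Finset.sum_const, nsmul_eq_mul]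
    congr 1
    have : (Finset.univ.filter (fun i => m < i)) = Finset.Ioi m := by
      ext; simp
    rw [this, Fin.card_Ioi]
    have := m.2
    rw [Nat.cast_sub (by omega), Nat.cast_sub (by omega)]
    simp
  have e2 : ∑ i : Fin k, ∑ j ∈ Finset.univ.filter (fun j => j < i), dist (z i) (z j)
      ≤ Dsum (Finset.univ.image z) := by
    rw [aux_Dsum, Finset.sum_image (fun a _ b _ h => hinj h)]
    apply Finset.sum_le_sum
    intro i _
    rw [Finset.sum_image (fun a _ b _ h => hinj h)]
    exact Finset.sum_le_sum_of_subset_of_nonneg (Finset.filter_subset _ _)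
      (fun i _ _ => dist_nonneg)
  have e3 : Qsum q (Finset.univ.image z) = ∑ i, q (z i) := by
    unfold Qsum
    rw [Finset.sum_image (fun a _ b _ h => hinj h)]
  have e4 : ∑ m : Fin k, ((k : ℝ) - 1 - (m : ℕ)) * ((1 - lam) * dist t (z m))
      = (1 - lam) * ∑ m : Fin k, ((k : ℝ) - 1 - (m : ℕ)) * dist t (z m) := by
    rw [Finset.mul_sum]
    apply Finset.sum_congr rfl
    intro m _
    ring
  have e5 := mul_le_mul_of_nonneg_left e2 (by linarith : 0 ≤ 1 - lam)
  rw [e1] at key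
  unfold Fobj
  rw [e3, e4]
  nlinarith

theorem aux_avg {α β : Type*} [DecidableEq α] [DecidableEq β] (C : Finset α) (N : Finset β)
    (hCN : C.card ≤ N.card) (cost : α → β → ℝ) (b0 : β) :
    ∃ f : α → β, (∀ o ∈ C, f o ∈ N) ∧ Set.InjOn f C ∧
      (N.card : ℝ) * ∑ o ∈ C, cost o (f o) ≤ ∑ o ∈ C, ∑ s ∈ N, cost o s := by
  by_cases h0 : N.card = 0
  · have hN : C = ∅ := by
      rw [← Finset.card_eq_zero]; omega
    subst hN
    exact ⟨fun _ => b0, by simp, by simp, by simp⟩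
  obtain ⟨n, hn⟩ := Nat.exists_eq_succ_of_ne_zero h0
  have eN : N ≃ Fin (n+1) := N.equivFinOfCardEq hn
  have eC : C ≃ Fin C.card := C.equivFin
  let e : C → Fin (n+1) := fun o => Fin.castLE (by omega) (eC o)
  have he : Function.Injective e := by
    intro a b h
    exact eC.injective (Fin.castLE_injective _ h)
  let g : Fin (n+1) → C → N := fun c o => eN.symm (e o + c)
  have hsum : ∑ c : Fin (n+1), ∑ o : C, cost o (g c o) = ∑ o ∈ C, ∑ s ∈ N, cost o s := by
    rw [Finset.sum_comm, ← Finset.sum_coe_sort C]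
    apply Finset.sum_congr rfl
    intro o _
    rw [← Finset.sum_coe_sort N]
    rw [← Equiv.sum_comp eN.symm (fun s : N => cost o s),
      ← Equiv.sum_comp (Equiv.addLeft (e o)) (fun i => cost o (eN.symm i))]
    rfl
  obtain ⟨c, -, hc⟩ := Finset.exists_le_of_sum_le (s := (Finset.univ : Finset (Fin (n+1))))
    (f := fun c => (N.card : ℝ) * ∑ o : C, cost o (g c o))
    (g := fun _ => ∑ o ∈ C, ∑ s ∈ N, cost o s) ⟨0, Finset.mem_univ _⟩ (by
      rw [← Finset.mul_sum, hsum, Finset.sum_const, Finset.card_univ, Fintype.card_fin,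
        nsmul_eq_mul, hn])
  refine ⟨fun o => if h : o ∈ C then (g c ⟨o, h⟩ : β) else b0, ?_, ?_, ?_⟩
  · intro o ho
    simp only [ho, dif_pos]
    exact (g c ⟨o, ho⟩).2
  · intro a ha b hb hab
    have ha' : a ∈ C := ha
    have hb' : b ∈ C := hb
    simp only [ha', hb', dif_pos] at hab
    have h1 := Subtype.ext hab
    have h2 := eN.symm.injective h1
    have h3 := he (add_right_cancel h2)
    exact congrArg Subtype.val h3
  · refine le_trans (le_of_eq ?_) hc
    congr 1
    rw [← Finset.sum_coe_sort C]
    apply Finset.sum_congr rfl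
    intro o _
    simp

theorem aux_slot (k : ℕ) (hk : 2 ≤ k) (x : Fin k → ℝ) :
    ((k : ℝ) - 1) * ∑ s : Fin k, min (x s) (x s.rev) ≤
      2 * ∑ s : Fin k, ((k : ℝ) - 1 - (s : ℕ)) * x s := by
  have hrev : ∑ s : Fin k, ((s : ℕ) : ℝ) * x s.rev
      = ∑ s : Fin k, ((k : ℝ) - 1 - (s : ℕ)) * x s := by
    rw [← Equiv.sum_comp Fin.revPerm]
    apply Finset.sum_congr rfl
    intro s _
    have := s.2
    simp only [Fin.revPerm_apply, Fin.rev_rev, Fin.val_rev]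
    rw [Nat.cast_sub (by omega)]
    push_cast
    ring
  have : 2 * ∑ s : Fin k, ((k : ℝ) - 1 - (s : ℕ)) * x s
      = ∑ s : Fin k, (((k : ℝ) - 1 - (s : ℕ)) * x s + ((s : ℕ) : ℝ) * x s.rev) := by
    rw [Finset.sum_add_distrib, hrev]; ring
  rw [this, Finset.mul_sum]
  apply Finset.sum_le_sum
  intro s _
  have hs : ((s : ℕ) : ℝ) + 1 ≤ k := by exact_mod_cast s.2
  have h0 : (0 : ℝ) ≤ (s : ℕ) := Nat.cast_nonneg _
  have a1 := mul_le_mul_of_nonneg_left (min_le_left (x s) (x s.rev))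
    (by linarith : 0 ≤ (k : ℝ) - 1 - (s : ℕ))
  have a2 := mul_le_mul_of_nonneg_left (min_le_right (x s) (x s.rev)) h0
  linarith

theorem aux_part {M : Type*} [DecidableEq M] (w : M → ℝ) (d : M → M → ℝ)
    (hw : ∀ u, 0 ≤ w u) (hd : ∀ u v, 0 ≤ d u v)
    (k : ℕ) (hk : 2 ≤ k) (z : Fin k → M) (hinj : Function.Injective z)
    (Oi S : Finset M) (hS : S = Finset.univ.image z) (hcard : Oi.card ≤ k) (V : ℝ)
    (hV : ∀ o ∈ Oi \ S,
      (k : ℝ) * w o + ∑ m : Fin k, ((k : ℝ) - 1 - (m : ℕ)) * d o (z m) ≤ V) :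
    ∃ π : M → M, (∀ o ∈ Oi, π o ∈ S) ∧ (∀ o ∈ Oi ∩ S, π o = o) ∧
      (∀ p, (Oi.filter (fun o => π o = p)).card ≤ 2) ∧
      ((k : ℝ) - (Oi ∩ S).card) * ∑ o ∈ Oi \ S, (w o + 2 * ((k : ℝ) - 1) * d o (π o)) ≤
        4 * V * (Oi \ S).card := by
  classical
  let C := Oi \ S
  let N : Finset (Fin k) := Finset.univ.filter (fun s => z s ∉ Oi)
  have hk1 : (0 : ℝ) < (k : ℝ) - 1 := by
    have : (2 : ℝ) ≤ k := by exact_mod_cast hk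
    linarith
  have hB : (Finset.univ.filter (fun s => z s ∈ Oi)).card = (Oi ∩ S).card := by
    rw [← Finset.card_image_of_injective _ hinj]
    congr 1
    ext p
    simp only [Finset.mem_image, Finset.mem_filter, Finset.mem_univ, true_and, hS,
      Finset.mem_inter]
    constructor
    · rintro ⟨s, hs, rfl⟩
      exact ⟨hs, s, rfl⟩
    · rintro ⟨hp, s, rfl⟩
      exact ⟨s, hp, rfl⟩
  have hNc : (Oi ∩ S).card + N.card = k := by
    rw [← hB]
    have := Finset.card_filter_add_card_filter_not (s := (Finset.univ : Finset (Fin k)))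
      (fun s => z s ∈ Oi)
    simpa [N] using this
  have hOc : (Oi ∩ S).card + C.card = Oi.card := Finset.card_inter_add_card_sdiff Oi S
  let cost : M → Fin k → ℝ := fun o s => min (d o (z s)) (d o (z s.rev))
  have hcost0 : ∀ o s, 0 ≤ cost o s := fun o s => le_min (hd _ _) (hd _ _)
  obtain ⟨f, hfN, hfinj, hfc⟩ := aux_avg C N (by omega) cost ⟨0, by omega⟩
  let π : M → M := fun o => if o ∈ S then o else
    if d o (z (f o)) ≤ d o (z (f o).rev) then z (f o) else z (f o).rev
  have hπd : ∀ o ∈ C, d o (π o) = cost o (f o) := by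
    intro o ho
    have ho' : o ∉ S := (Finset.mem_sdiff.1 ho).2
    simp only [π, cost, ho', if_false]
    split_ifs with h
    · rw [min_eq_left h]
    · rw [min_eq_right (le_of_not_ge h)]
  have hzS : ∀ s, z s ∈ S := by
    intro s; rw [hS]; exact Finset.mem_image_of_mem _ (Finset.mem_univ _)
  refine ⟨π, ?_, ?_, ?_, ?_⟩
  · intro o _
    simp only [π]
    split_ifs with h1 h2
    · exact h1
    · exact hzS _
    · exact hzS _
  · intro o ho
    have := (Finset.mem_inter.1 ho).2
    simp [π, this]
  · intro p
    by_cases hp : p ∈ S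
    · rw [hS] at hp
      obtain ⟨m, -, rfl⟩ := Finset.mem_image.1 hp
      -- map the fibre injectively to slots
      let h : M → Fin k := fun o => if o ∈ S then m else f o
      have hsub : ∀ o ∈ Oi.filter (fun o => π o = z m), h o ∈ ({m, m.rev} : Finset (Fin k)) := by
        intro o ho
        obtain ⟨ho1, ho2⟩ := Finset.mem_filter.1 ho
        simp only [h]
        by_cases hoS : o ∈ S
        · simp [hoS]
        · simp only [hoS, if_false]
          simp only [π, hoS, if_false] at ho2
          split_ifs at ho2 with h3
          · simp [hinj ho2]
          · have := hinj ho2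
            simp [← this]
      have hinjOn : Set.InjOn h (Oi.filter (fun o => π o = z m) : Finset M) := by
        intro a ha b hb hab
        obtain ⟨ha1, ha2⟩ := Finset.mem_filter.1 ha
        obtain ⟨hb1, hb2⟩ := Finset.mem_filter.1 hb
        by_cases haS : a ∈ S <;> by_cases hbS : b ∈ S
        · simp only [π, haS, hbS, if_true] at ha2 hb2
          rw [ha2, hb2]
        · exfalso
          simp only [h, haS, hbS, if_true, if_false] at hab
          simp only [π, haS, if_true] at ha2
          have := hfN b (Finset.mem_sdiff.2 ⟨hb1, hbS⟩)
          rw [← hab] at this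
          exact (Finset.mem_filter.1 this).2 (ha2 ▸ ha1)
        · exfalso
          simp only [h, haS, hbS, if_true, if_false] at hab
          simp only [π, hbS, if_true] at hb2
          have := hfN a (Finset.mem_sdiff.2 ⟨ha1, haS⟩)
          rw [hab] at this
          exact (Finset.mem_filter.1 this).2 (hb2 ▸ hb1)
        · simp only [h, haS, hbS, if_false] at hab
          exact hfinj (Finset.mem_sdiff.2 ⟨ha1, haS⟩) (Finset.mem_sdiff.2 ⟨hb1, hbS⟩) hab
      exact (Finset.card_le_card_of_injOn h hsub hinjOn).trans Finset.card_le_two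
    · rw [Finset.filter_eq_empty_iff.2]
      · simp
      · intro o _ h
        apply hp
        rw [← h]
        simp only [π]
        split_ifs with h1 h2
        · exact h1
        · exact hzS _
        · exact hzS _
  · have hNr : (k : ℝ) - (Oi ∩ S).card = N.card := by
      have : ((Oi ∩ S).card : ℝ) + N.card = k := by exact_mod_cast hNc
      linarith
    rw [hNr]
    have hNk : (N.card : ℝ) ≤ k := by exact_mod_cast (by omega : N.card ≤ k)
    have b1 : ∑ o ∈ C, ∑ s ∈ N, cost o s ≤ ∑ o ∈ C, (2 / ((k : ℝ) - 1)) * (V - k * w o) := by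
      apply Finset.sum_le_sum
      intro o ho
      have c1 : ∑ s ∈ N, cost o s ≤ ∑ s, cost o s :=
        Finset.sum_le_sum_of_subset_of_nonneg (Finset.subset_univ _) (fun s _ _ => hcost0 o s)
      have c2 := aux_slot k hk (fun s => d o (z s))
      have c3 := hV o ho
      refine c1.trans ?_
      rw [div_mul_eq_mul_div, le_div_iff₀ hk1]
      simp only [cost]
      linarith
    have b2 : ∑ o ∈ Oi \ S, (w o + 2 * ((k : ℝ) - 1) * d o (π o))
        = ∑ o ∈ C, w o + 2 * ((k : ℝ) - 1) * ∑ o ∈ C, cost o (f o) := by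
      rw [Finset.sum_add_distrib, Finset.mul_sum]
      congr 1
      apply Finset.sum_congr rfl
      intro o ho
      rw [hπd o ho]
    have b3 : ∑ o ∈ C, (2 / ((k : ℝ) - 1)) * (V - k * w o)
        = (2 / ((k : ℝ) - 1)) * (C.card * V - k * ∑ o ∈ C, w o) := by
      rw [← Finset.mul_sum, Finset.sum_sub_distrib, Finset.sum_const, nsmul_eq_mul,
        Finset.mul_sum]
    have b4 : (N.card : ℝ) * ∑ o ∈ C, cost o (f o) ≤
      (2 / ((k : ℝ) - 1)) * (C.card * V - k * ∑ o ∈ C, w o) := by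
      rw [← b3]; exact hfc.trans b1
    rw [div_mul_eq_mul_div, le_div_iff₀ hk1] at b4
    have hW : 0 ≤ ∑ o ∈ C, w o := Finset.sum_nonneg (fun o _ => hw o)
    rw [b2]
    have b5 : (N.card : ℝ) * ∑ o ∈ C, w o ≤ k * ∑ o ∈ C, w o :=
      mul_le_mul_of_nonneg_right hNk hW
    have b6 : 0 ≤ (k : ℝ) * ∑ o ∈ C, w o := mul_nonneg (Nat.cast_nonneg _) hW
    change (N.card : ℝ) * _ ≤ 4 * V * C.card
    nlinarith

theorem aux_fiber {M : Type*} [DecidableEq M] (O : Finset M) (π : M → M)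
    (h : ∀ p, (O.filter (fun o => π o = p)).card ≤ 2) (g : M → ℝ) (hg : ∀ u, 0 ≤ g u) :
    ∑ o ∈ O, g (π o) ≤ 2 * ∑ p ∈ O.image π, g p := by
  rw [Finset.sum_comp, Finset.mul_sum]
  apply Finset.sum_le_sum
  intro p _
  rw [nsmul_eq_mul]
  exact mul_le_mul_of_nonneg_right (by exact_mod_cast h p) (hg p)

theorem stmt_8 {M : Type*} [MetricSpace M] [DecidableEq M]
    (q : M → ℝ) (hq : ∀ u, 0 ≤ q u)
    (lam : ℝ) (hlam0 : 0 < lam) (hlam1 : lam < 1)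
    (k l : ℕ)
    (Upart : Fin l → Finset M)
    (hdisj : ∀ i j, i ≠ j → Disjoint (Upart i) (Upart j))
    (hcard : ∀ i, k ≤ (Upart i).card)
    (U : Finset M) (hU : U = Finset.univ.biUnion Upart)
    (z : ∀ _ : Fin l, Fin k → M)
    (hz : ∀ i, IsGreedySel q (fun u v => dist u v) lam (1 - lam) (Upart i) k (z i))
    (S : Fin l → Finset M) (hS : ∀ i, S i = Finset.univ.image (z i))
    (OptU : Finset M) (hOptU : IsOptSubset q lam (Finset.univ.biUnion S) k OptU)
    (O : Finset M) (hO : IsOptSubset q lam U k O)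
    (hk : 2 ≤ k)
    (A : Finset M) (hAsub : A ⊆ Finset.univ.biUnion S) (hAcard : A.card = k)
    (hA : (1 / 2) * Fobj q lam OptU ≤ Fobj q lam A) :
    (1 / 16) * Fobj q lam O ≤ Fobj q lam A := by
  have hl : 0 < 1 - lam := by linarith
  have hk2 : (2 : ℝ) ≤ k := by exact_mod_cast hk
  set V := Fobj q lam OptU with hVdef
  obtain ⟨hOsub, hOcard, -⟩ := hO
  obtain ⟨hPsub, hPcard, hPmax⟩ := hOptU
  have hSU : ∀ i, S i ⊆ Upart i := by
    intro i p hp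
    rw [hS] at hp
    obtain ⟨m, -, rfl⟩ := Finset.mem_image.1 hp
    exact (hz i).2.1 m
  have huniq : ∀ i j p, p ∈ Upart i → p ∈ Upart j → i = j := by
    intro i j p hi hj
    by_contra hne
    exact Finset.disjoint_left.1 (hdisj i j hne) hi hj
  have hScard : ∀ i, (S i).card = k := by
    intro i
    rw [hS, Finset.card_image_of_injective _ (hz i).1]
    simp
  have hFS : ∀ i, Fobj q lam (S i) ≤ V := fun i =>
    hPmax _ (Finset.subset_biUnion_of_mem S (Finset.mem_univ i)) (hScard i)
  have hpart : ∀ i, _ := fun i => aux_part (fun u => lam * q u) (fun u v => (1 - lam) * dist u v)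
    (fun u => mul_nonneg hlam0.le (hq u)) (fun u v => mul_nonneg hl.le dist_nonneg)
    k hk (z i) (hz i).1 (O ∩ Upart i) (S i) (hS i)
    ((Finset.card_le_card Finset.inter_subset_left).trans hOcard.le) V (by
      intro o ho
      obtain ⟨ho1, ho2⟩ := Finset.mem_sdiff.1 ho
      have := aux_greedy q lam hlam1 k (Upart i) (z i) (hz i) o (Finset.mem_inter.1 ho1).2
        (by rw [← hS]; exact ho2)
      rw [← hS] at this
      exact this.trans (hFS i))
  choose πi hπS hπid hπfib hπcost using hpart
  have hex : ∀ o, ∃ i, o ∈ O → o ∈ Upart i := by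
    intro o
    by_cases ho : o ∈ O
    · have := hOsub ho
      rw [hU] at this
      obtain ⟨i, -, hi⟩ := Finset.mem_biUnion.1 this
      exact ⟨i, fun _ => hi⟩
    · have hne : O.Nonempty := by
        rw [← Finset.card_pos]; omega
      obtain ⟨o', ho'⟩ := hne
      have := hOsub ho'
      rw [hU] at this
      obtain ⟨i, -, hi⟩ := Finset.mem_biUnion.1 this
      exact ⟨i, fun h => absurd h ho⟩
  choose part hpartU using hex
  have hpart_eq : ∀ i o, o ∈ O → o ∈ Upart i → part o = i := fun i o ho hi =>
    huniq _ _ o (hpartU o ho) hi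
  let π : M → M := fun o => πi (part o) o
  have hπmem : ∀ o ∈ O, π o ∈ S (part o) := fun o ho =>
    hπS _ o (Finset.mem_inter.2 ⟨ho, hpartU o ho⟩)
  have hfib : ∀ p, (O.filter (fun o => π o = p)).card ≤ 2 := by
    intro p
    by_cases hne : (O.filter (fun o => π o = p)).Nonempty
    · obtain ⟨o', ho'⟩ := hne
      obtain ⟨ho1, ho2⟩ := Finset.mem_filter.1 ho'
      refine (Finset.card_le_card ?_).trans (hπfib (part o') p)
      intro o ho
      obtain ⟨h1, h2⟩ := Finset.mem_filter.1 ho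
      have h3 : part o = part o' := by
        have a1 := hSU _ (hπmem o h1)
        have a2 := hSU _ (hπmem o' ho1)
        rw [h2] at a1
        rw [ho2] at a2
        exact huniq _ _ p a1 a2
      refine Finset.mem_filter.2 ⟨Finset.mem_inter.2 ⟨h1, h3 ▸ hpartU o h1⟩, ?_⟩
      rw [← h3]; exact h2
    · rw [Finset.not_nonempty_iff_eq_empty] at hne
      rw [hne]; simp
  set SS := Finset.univ.biUnion S with hSS
  -- the image
  let T := O.image π
  have hTsub : T ⊆ SS := by
    intro p hp
    obtain ⟨o, ho, rfl⟩ := Finset.mem_image.1 hp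
    exact Finset.mem_biUnion.2 ⟨_, Finset.mem_univ _, hπmem o ho⟩
  have hTcard : T.card ≤ k := Finset.card_image_le.trans hOcard.le
  have hFT : Fobj q lam T ≤ V := by
    obtain ⟨R, hR1, hR2, hR3⟩ := Finset.exists_subsuperset_card_eq hTsub hTcard
      (hPcard ▸ Finset.card_le_card hPsub)
    exact (aux_F_mono q hq lam hlam0 hlam1 T R hR1).trans (hPmax R hR2 hR3)
  -- elements of O in SS
  have hSSpart : ∀ o ∈ O, ∀ i, o ∈ Upart i → (o ∈ SS ↔ o ∈ S i) := by
    intro o ho i hi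
    constructor
    · intro h
      obtain ⟨j, -, hj⟩ := Finset.mem_biUnion.1 h
      rw [huniq i j o hi (hSU j hj)]; exact hj
    · intro h
      exact Finset.mem_biUnion.2 ⟨i, Finset.mem_univ _, h⟩
  have hπself : ∀ o ∈ O ∩ SS, π o = o := by
    intro o ho
    obtain ⟨h1, h2⟩ := Finset.mem_inter.1 ho
    exact hπid _ o (Finset.mem_inter.2 ⟨Finset.mem_inter.2 ⟨h1, hpartU o h1⟩,
      (hSSpart o h1 _ (hpartU o h1)).1 h2⟩)
  have hBT : O ∩ SS ⊆ T := by
    intro o ho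
    exact Finset.mem_image.2 ⟨o, (Finset.mem_inter.1 ho).1, hπself o ho⟩
  have hV0 : 0 ≤ V := by
    rw [hVdef]
    unfold Fobj Qsum Dsum
    have := Finset.sum_nonneg (s := OptU) (fun u _ => hq u)
    have h2 : 0 ≤ ∑ p ∈ OptU.offDiag, dist p.1 p.2 := Finset.sum_nonneg (fun p _ => dist_nonneg)
    positivity
  -- the cost of elements outside SS
  let φ : M → ℝ := fun o => lam * q o + 2 * ((k : ℝ) - 1) * ((1 - lam) * dist o (π o))
  have hφ0 : ∀ o, 0 ≤ φ o := by
    intro o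
    have h1 := mul_nonneg hlam0.le (hq o)
    have h2 : 0 ≤ (1 - lam) * dist o (π o) := mul_nonneg hl.le dist_nonneg
    have h3 : 0 ≤ 2 * ((k : ℝ) - 1) := by linarith
    exact add_nonneg h1 (mul_nonneg h3 h2)
  have hCi : ∀ i, (O ∩ Upart i) \ S i = (O \ SS).filter (fun o => part o = i) := by
    intro i
    ext o
    simp only [Finset.mem_sdiff, Finset.mem_inter, Finset.mem_filter]
    constructor
    · rintro ⟨⟨h1, h2⟩, h3⟩
      exact ⟨⟨h1, fun h => h3 ((hSSpart o h1 i h2).1 h)⟩, hpart_eq i o h1 h2⟩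
    · rintro ⟨⟨h1, h2⟩, rfl⟩
      exact ⟨⟨h1, hpartU o h1⟩, fun h => h2 ((hSSpart o h1 _ (hpartU o h1)).2 h)⟩
  have hcostC : ∑ o ∈ O \ SS, φ o ≤ 4 * V := by
    by_cases hC0 : (O \ SS).card = 0
    · rw [Finset.card_eq_zero] at hC0
      rw [hC0, Finset.sum_empty]; linarith
    have hCpos : (0 : ℝ) < (O \ SS).card := by exact_mod_cast Nat.pos_of_ne_zero hC0
    have hi : ∀ i, ((O \ SS).card : ℝ) * ∑ o ∈ (O \ SS).filter (fun o => part o = i), φ o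
        ≤ 4 * V * ((O \ SS).filter (fun o => part o = i)).card := by
      intro i
      have h := hπcost i
      rw [hCi] at h
      have e : ∑ o ∈ (O \ SS).filter (fun o => part o = i),
          (lam * q o + 2 * ((k : ℝ) - 1) * ((1 - lam) * dist o (πi i o)))
          = ∑ o ∈ (O \ SS).filter (fun o => part o = i), φ o := by
        apply Finset.sum_congr rfl
        intro o ho
        have := (Finset.mem_filter.1 ho).2
        simp only [φ, π, this]
      rw [e] at h
      refine le_trans (mul_le_mul_of_nonneg_right ?_ (Finset.sum_nonneg (fun o _ => hφ0 o))) h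
      have h1 : (O ∩ Upart i ∩ S i).card ≤ (O ∩ SS).card := by
        apply Finset.card_le_card
        intro o ho
        simp only [Finset.mem_inter] at ho
        exact Finset.mem_inter.2 ⟨ho.1.1, (hSSpart o ho.1.1 i ho.1.2).2 ho.2⟩
      have h2 := Finset.card_inter_add_card_sdiff O SS
      have h3 : ((O \ SS).card : ℝ) + (O ∩ Upart i ∩ S i).card ≤ k := by
        exact_mod_cast (by omega : (O \ SS).card + (O ∩ Upart i ∩ S i).card ≤ k)
      linarith
    have hs := Finset.sum_le_sum (s := (Finset.univ : Finset (Fin l))) (fun i _ => hi i)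
    rw [← Finset.mul_sum, ← Finset.mul_sum, Finset.sum_fiberwise, ← Nat.cast_sum,
      ← Finset.card_eq_sum_card_fiberwise (fun o _ => Finset.mem_coe.2 (Finset.mem_univ _))] at hs
    rw [mul_comm] at hs
    exact le_of_mul_le_mul_right hs hCpos
  -- distances
  have hr : ∑ o ∈ O, dist o (π o) = ∑ o ∈ O \ SS, dist o (π o) := by
    symm
    apply Finset.sum_subset Finset.sdiff_subset
    intro o ho ho'
    have : o ∈ SS := by
      by_contra h
      exact ho' (Finset.mem_sdiff.2 ⟨ho, h⟩)
    rw [hπself o (Finset.mem_inter.2 ⟨ho, this⟩), dist_self]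
  have hDT : ∑ u ∈ O, ∑ v ∈ O, dist (π u) (π v) ≤ 4 * Dsum T := by
    rw [aux_Dsum]
    have s1 : ∀ x : M, ∑ v ∈ O, dist x (π v) ≤ 2 * ∑ v ∈ T, dist x v := fun x =>
      aux_fiber O π hfib (fun v => dist x v) (fun _ => dist_nonneg)
    have s2 := aux_fiber O π hfib (fun u => ∑ v ∈ T, dist u v)
      (fun _ => Finset.sum_nonneg (fun _ _ => dist_nonneg))
    calc ∑ u ∈ O, ∑ v ∈ O, dist (π u) (π v) ≤ ∑ u ∈ O, 2 * ∑ v ∈ T, dist (π u) v :=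
          Finset.sum_le_sum (fun u _ => s1 (π u))
      _ = 2 * ∑ u ∈ O, ∑ v ∈ T, dist (π u) v := by rw [Finset.mul_sum]
      _ ≤ 4 * ∑ u ∈ T, ∑ v ∈ T, dist u v := by
          change _ ≤ 2 * ∑ u ∈ T, ∑ v ∈ T, dist u v at s2
          linarith
  have hDO : Dsum O ≤ 2 * ((k : ℝ) - 1) * ∑ o ∈ O, dist o (π o)
      + ∑ u ∈ O, ∑ v ∈ O, dist (π u) (π v) := by
    have t1 : Dsum O ≤ ∑ u ∈ O, ∑ v ∈ O.erase u,
        (dist u (π u) + dist v (π v) + dist (π u) (π v)) := by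
      rw [aux_Dsum]
      apply Finset.sum_le_sum
      intro u hu
      rw [← Finset.add_sum_erase O _ hu, dist_self, zero_add]
      apply Finset.sum_le_sum
      intro v _
      have := dist_triangle4 u (π u) (π v) v
      rw [dist_comm (π v) v] at this
      linarith
    refine t1.trans (le_of_eq ?_)
    have t2 : ∀ u ∈ O, ∑ v ∈ O.erase u, (dist u (π u) + dist v (π v) + dist (π u) (π v))
        = (k : ℝ) * dist u (π u) + ∑ v ∈ O, dist v (π v) + ∑ v ∈ O, dist (π u) (π v)
          - 2 * dist u (π u) := by
      intro u hu
      have := Finset.add_sum_erase O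
        (fun v => dist u (π u) + dist v (π v) + dist (π u) (π v)) hu
      simp only [Finset.sum_add_distrib, Finset.sum_const, nsmul_eq_mul, dist_self, hOcard]
        at this ⊢
      linarith
    rw [Finset.sum_congr rfl t2]
    simp only [Finset.sum_add_distrib, Finset.sum_sub_distrib, Finset.sum_const, nsmul_eq_mul,
      ← Finset.mul_sum, hOcard]
    ring
  have hQ : Qsum q O = ∑ o ∈ O ∩ SS, q o + ∑ o ∈ O \ SS, q o := by
    unfold Qsum
    rw [Finset.sum_inter_add_sum_sdiff]
  have hQB : ∑ o ∈ O ∩ SS, q o ≤ Qsum q T :=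
    Finset.sum_le_sum_of_subset_of_nonneg hBT (fun i _ _ => hq i)
  have hQT : 0 ≤ Qsum q T := Finset.sum_nonneg (fun i _ => hq i)
  have hφs : ∑ o ∈ O \ SS, φ o = lam * ∑ o ∈ O \ SS, q o
      + (1 - lam) * (2 * ((k : ℝ) - 1) * ∑ o ∈ O \ SS, dist o (π o)) := by
    simp only [φ, Finset.sum_add_distrib, ← Finset.mul_sum]
    ring
  rw [hr] at hDO
  have hfin : Fobj q lam O ≤ 8 * V := by
    have f1 := mul_le_mul_of_nonneg_left (hDO.trans (add_le_add_right hDT _)) hl.le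
    have f2 := mul_le_mul_of_nonneg_left hQB hlam0.le
    have f3 := mul_nonneg hlam0.le hQT
    rw [hφs] at hcostC
    unfold Fobj at hFT ⊢
    rw [hQ]
    nlinarith
  linarith
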